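/- Let μ be an ergodic process on Σ = 𝒜^{ℤ_{≥0}^d} with entropy rate h(μ) = h and let δ ∈ (0, 1/2). Then there is k_0 = k_0(δ) such that for every k ≥ k_0 there exists a set 𝒯_k ⊆ Σ^k with log|𝒯_k| / k^d ≤ h + δ, such that for μ-almost every x there is n_0 = n_0(x,k,δ) with 𝜇̃_x^{k,n}(𝒯_k) > 1 − δ for all n ≥ n_0. -/

import Mathlib

open MeasureTheory Filter Topology

namespace SRU1408

/-- A site of the lattice `ℤ_{≥0}^d`. -/
abbrev Site (d : ℕ) := Fin d → ℕ

/-- An infinite array over the alphabet `Fin A`, i.e. an element of `Σ = 𝒜^{ℤ_{≥0}^d}`. -/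
abbrev Config (A d : ℕ) := Site d → Fin A

/-- A cubical `k`-word, i.e. an element of `Σ^k = 𝒜^{Λ_k}`. -/
abbrev Word (A d k : ℕ) := (Fin d → Fin k) → Fin A

variable {A d : ℕ}

/-- The pattern of `x` on the cube `Λ_k + c`, as a `k`-word. -/
def wordAt (x : Config A d) (k : ℕ) (c : Site d) : Word A d k :=
  fun i => x fun j => c j + (i j : ℕ)

/-- The lattice shift `σ_r`. -/
def shift (r : Site d) (x : Config A d) : Config A d := fun i => x (i + r)

/-- Stationarity: invariance under all shifts. -/
def Stationary (μ : Measure (Config A d)) : Prop := ∀ r : Site d, μ.map (shift r) = μ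

/-- Ergodicity: stationary, and every measurable set invariant under all shifts is trivial. -/
def ErgodicShift (μ : Measure (Config A d)) : Prop :=
  Stationary μ ∧ ∀ E : Set (Config A d), MeasurableSet E →
    (∀ r : Site d, shift r ⁻¹' E = E) → μ E = 0 ∨ μ E = 1

/-- The `k`-word marginal distribution `μ^k`, as a probability vector on `Σ^k`. -/
noncomputable def wordDist (μ : Measure (Config A d)) (k : ℕ) : Word A d k → ℝ :=
  fun w => (μ {x | wordAt x k 0 = w}).toReal

/-- Base-`A` entropy of a probability vector. -/
noncomputable def entH (A : ℕ) {W : Type*} [Fintype W] (p : W → ℝ) : ℝ :=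
  -∑ w, p w * Real.logb A (p w)

/-- `μ` has entropy rate `h` (base-`A` logarithms): `H(μ^n)/n^d → h`. -/
def HasEntropyRate (μ : Measure (Config A d)) (h : ℝ) : Prop :=
  Tendsto (fun n : ℕ => entH A (wordDist μ n) / (n : ℝ) ^ d) atTop (𝓝 h)

/-- The empirical non-overlapping `k`-block distribution `𝜇̃_x^{k,n}` of `x` over `Λ_n`. -/
noncomputable def empDist (x : Config A d) (k n : ℕ) : Word A d k → ℝ := fun w =>
  (Set.ncard {r : Fin d → Fin (n / k) | wordAt x k (fun j => k * (r j : ℕ)) = w} : ℝ) /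
    ((n / k : ℕ) : ℝ) ^ d

/-- The empirical probability `𝜇̃_x^{k,n}(S)` of a set `S` of `k`-words. -/
noncomputable def empProb (x : Config A d) (k n : ℕ) (S : Set (Word A d k)) : ℝ :=
  (Set.ncard {r : Fin d → Fin (n / k) | wordAt x k (fun j => k * (r j : ℕ)) ∈ S} : ℝ) /
    ((n / k : ℕ) : ℝ) ^ d

/-- `k(n) = ⌊(log_A n^d)^{1/d}⌋`. -/
noncomputable def kOf (A d n : ℕ) : ℕ :=
  ⌊(Real.logb A ((n : ℝ) ^ d)) ^ (1 / (d : ℝ))⌋₊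

/-!
Fix `m` so large that the entropy `H(μ^m)` of the `m`-words is at most `(h + ε) m^d`. By the
pointwise ergodic theorem, for large `k` the information content `-log μ^m` of the `m`-words has
average at most `H(μ^m) + ε` over most of the aligned `k`-blocks of almost every configuration.
Such a `k`-block splits, for each of the `m^d` phases, into disjoint `m`-words and a thin boundary
layer, and by pigeonhole the `m`-words of some phase have total information at most
`(h + 2ε) k^d`. As the product weights of all tuples of `m`-words sum to one, at most
`A^((h + 2ε) k^d)` tuples occur; the choice of the phase and of the boundary letters contributes
only a factor `A^(ε k^d)` to the number of `k`-blocks.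

The ergodic theorem itself combines mean convergence, obtained by splitting `L²(μ)` into
the fixed vectors of the shifts and the vectors whose averages tend to zero, with a maximal
inequality, obtained from a Vitali covering of the lattice by cubes.
-/

open scoped Finset

section Lattice

/-- The cube `Λ_n` as a finite set of sites. -/
def box (d n : ℕ) : Finset (Site d) := Fintype.piFinset fun _ => Finset.range n

/-- The translated cube `Λ_n + c`. -/
def cube (c : Site d) (n : ℕ) : Finset (Site d) := (box d n).map (addRightEmbedding c)

/-- The outer layer of thickness `R` of `Λ_n`, on the sides away from the origin; the cube `Λ_n`
differs from its translates by vectors of `Λ_{R+1}` by no more than such layers. -/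
def shell (d R n : ℕ) : Finset (Site d) := box d n \ box d (n - R)

/-- The average of `φ` over `Λ_n`. -/
noncomputable def boxAvg {E : Type*} [AddCommGroup E] [Module ℝ E] (n : ℕ) (φ : Site d → E) : E :=
  ((n : ℝ) ^ d)⁻¹ • ∑ c ∈ box d n, φ c

lemma mem_box {n : ℕ} {c : Site d} : c ∈ box d n ↔ ∀ j, c j < n := by
  simp [box]

lemma card_box (n : ℕ) : #(box d n) = n ^ d := by
  simp [box]

lemma box_mono {m n : ℕ} (hmn : m ≤ n) : box d m ⊆ box d n := fun _ hc =>
  mem_box.2 fun j => (mem_box.1 hc j).trans_le hmn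

lemma mem_cube {c x : Site d} {n : ℕ} : x ∈ cube c n ↔ ∀ j, c j ≤ x j ∧ x j < c j + n := by
  simp only [cube, Finset.mem_map, addRightEmbedding_apply]
  constructor
  · rintro ⟨a, ha, rfl⟩ j
    have := mem_box.1 ha j
    simp only [Pi.add_apply]
    omega
  · intro h
    refine ⟨x - c, mem_box.2 fun j => ?_, tsub_add_cancel_of_le fun j => (h j).1⟩
    have := h j
    simp only [Pi.sub_apply]
    omega

lemma card_cube (c : Site d) (n : ℕ) : #(cube c n) = n ^ d := by
  rw [cube, Finset.card_map, card_box]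

lemma sum_cube {E : Type*} [AddCommMonoid E] (c : Site d) (n : ℕ) (φ : Site d → E) :
    ∑ x ∈ cube c n, φ x = ∑ a ∈ box d n, φ (a + c) :=
  Finset.sum_map ..

lemma card_shell (d R n : ℕ) : #(shell d R n) = n ^ d - (n - R) ^ d := by
  rw [shell, Finset.card_sdiff_of_subset (box_mono (Nat.sub_le n R)), card_box, card_box]

lemma tendsto_card_shell_div (d R : ℕ) :
    Tendsto (fun n : ℕ => (#(shell d R n) : ℝ) / (n : ℝ) ^ d) atTop (𝓝 0) := by
  have hratio : Tendsto (fun n : ℕ => (1 : ℝ) - (1 - (R : ℝ) / n) ^ d) atTop (𝓝 0) := by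
    simpa using (((tendsto_const_div_atTop_nhds_zero_nat (R : ℝ)).const_sub 1).pow d).const_sub 1
  refine hratio.congr' ?_
  filter_upwards [eventually_gt_atTop R] with n hn
  have hn0 : (n : ℝ) ≠ 0 := by
    have : 0 < n := by omega
    positivity
  rw [card_shell, Nat.cast_sub (Nat.pow_le_pow_left (Nat.sub_le n R) d), Nat.cast_pow,
    Nat.cast_pow, Nat.cast_sub hn.le, sub_div, div_self (pow_ne_zero _ hn0), ← div_pow, sub_div,
    div_self hn0]

lemma eventually_const_add_card_shell_le (hd : 1 ≤ d) (L : ℝ) (R : ℕ) {ε : ℝ} (hε : 0 < ε) :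
    ∀ᶠ n : ℕ in atTop, L + #(shell d R n) ≤ ε * (n : ℝ) ^ d := by
  have hconst : Tendsto (fun n : ℕ => L / (n : ℝ) ^ d) atTop (𝓝 0) :=
    tendsto_const_nhds.div_atTop <|
      (tendsto_pow_atTop (by omega)).comp tendsto_natCast_atTop_atTop
  have hsum := hconst.add (tendsto_card_shell_div d R)
  rw [add_zero] at hsum
  filter_upwards [hsum.eventually_lt_const hε, eventually_gt_atTop 0] with n hn hn0
  rw [← add_div, div_lt_iff₀ (by positivity)] at hn
  exact hn.le

lemma sum_fin_eq_sum_box {E : Type*} [AddCommMonoid E] (n : ℕ) (φ : Site d → E) :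
    ∑ i : Fin d → Fin n, φ (fun j => i j) = ∑ c ∈ box d n, φ c :=
  Finset.sum_bij' (fun i _ j => (i j : ℕ)) (fun _ hc j => ⟨_, mem_box.1 hc j⟩)
    (fun i _ => mem_box.2 fun j => (i j).2) (by simp) (by simp) (by simp) (by simp)

/-- `c ↦ (c mod k, c / k)` identifies `Λ_{kn}` with `Λ_k × Λ_n`. -/
lemma sum_box_mul {E : Type*} [AddCommMonoid E] {k : ℕ} (hk : 0 < k) (n : ℕ) (φ : Site d → E) :
    ∑ r ∈ box d n, ∑ c ∈ box d k, φ (c + k • r) = ∑ c ∈ box d (k * n), φ c := by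
  rw [← Finset.sum_product']
  refine Finset.sum_bij' (fun p _ => p.2 + k • p.1)
    (fun c _ => (fun j => c j / k, fun j => c j % k)) ?_ ?_ ?_ ?_ fun _ _ => rfl
  · rintro ⟨r, c⟩ h
    simp only [Finset.mem_product, mem_box] at h ⊢
    intro j
    have hr := h.1 j
    have hc := h.2 j
    simp only [Pi.add_apply, Pi.smul_apply, smul_eq_mul]
    nlinarith
  · intro c h
    simp only [Finset.mem_product, mem_box] at h ⊢
    exact ⟨fun j => Nat.div_lt_of_lt_mul (h j), fun j => Nat.mod_lt _ hk⟩
  · rintro ⟨r, c⟩ h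
    simp only [Finset.mem_product, mem_box] at h
    ext j
    · simp [Nat.add_mul_div_left _ _ hk, Nat.div_eq_of_lt (h.2 j)]
    · simp [Nat.mod_eq_of_lt (h.2 j)]
  · intro c _
    ext j
    simp [Nat.mod_add_div]

lemma norm_sum_sub_sum_le_of_subset {ι E : Type*} [DecidableEq ι] [SeminormedAddCommGroup E]
    {s t : Finset ι} (hst : s ⊆ t) {ψ : ι → E} {C : ℝ} (hψ : ∀ i, ‖ψ i‖ ≤ C) :
    ‖∑ i ∈ t, ψ i - ∑ i ∈ s, ψ i‖ ≤ #(t \ s) * C := by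
  rw [← Finset.sum_sdiff hst, add_sub_cancel_right, ← nsmul_eq_mul, ← Finset.sum_const]
  exact norm_sum_le_of_le _ fun i _ => hψ i

end Lattice

section BoxAverage

section Module

variable {E : Type*} [AddCommGroup E] [Module ℝ E]

lemma pow_smul_boxAvg {n : ℕ} (hn : 0 < n) (φ : Site d → E) :
    (n : ℝ) ^ d • boxAvg n φ = ∑ c ∈ box d n, φ c :=
  smul_inv_smul₀ (by positivity) _

lemma boxAvg_add (n : ℕ) (φ ψ : Site d → E) :
    boxAvg n (fun c => φ c + ψ c) = boxAvg n φ + boxAvg n ψ := by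
  simp only [boxAvg, Finset.sum_add_distrib, smul_add]

lemma boxAvg_sub (n : ℕ) (φ ψ : Site d → E) :
    boxAvg n (fun c => φ c - ψ c) = boxAvg n φ - boxAvg n ψ := by
  simp only [boxAvg, Finset.sum_sub_distrib, smul_sub]

lemma boxAvg_smul (n : ℕ) (a : ℝ) (φ : Site d → E) :
    boxAvg n (fun c => a • φ c) = a • boxAvg n φ := by
  simp only [boxAvg, ← Finset.smul_sum, smul_comm a]

lemma boxAvg_const {n : ℕ} (hn : 0 < n) (v : E) : boxAvg n (fun _ : Site d => v) = v := by
  simp only [boxAvg, Finset.sum_const, card_box]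
  rw [← Nat.cast_smul_eq_nsmul ℝ, Nat.cast_pow, inv_smul_smul₀ (by positivity)]

lemma boxAvg_comm (m n : ℕ) (φ : Site d → Site d → E) :
    boxAvg m (fun c => boxAvg n fun r => φ c r) = boxAvg n fun r => boxAvg m fun c => φ c r := by
  simp only [boxAvg, ← Finset.smul_sum]
  rw [Finset.sum_comm, smul_comm]

lemma boxAvg_boxAvg_add_smul {k : ℕ} (hk : 0 < k) (n : ℕ) (φ : Site d → E) :
    boxAvg n (fun r => boxAvg k fun c => φ (c + k • r)) = boxAvg (k * n) φ := by
  simp only [boxAvg, ← Finset.smul_sum]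
  rw [sum_box_mul hk, smul_smul, Nat.cast_mul, mul_pow, mul_inv_rev]

end Module

section Norm

variable {E : Type*} [NormedAddCommGroup E] [NormedSpace ℝ E] {φ : Site d → E} {C : ℝ}

lemma norm_boxAvg_le (n : ℕ) (φ : Site d → E) : ‖boxAvg n φ‖ ≤ boxAvg n fun c => ‖φ c‖ := by
  simp only [boxAvg, norm_smul, norm_inv, norm_pow, Real.norm_natCast, smul_eq_mul]
  gcongr
  exact norm_sum_le _ _

lemma norm_boxAvg_le_of_forall_norm_le (hC : 0 ≤ C) {n : ℕ} (hφ : ∀ c ∈ box d n, ‖φ c‖ ≤ C) :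
    ‖boxAvg n φ‖ ≤ C := by
  have hsum : ‖∑ c ∈ box d n, φ c‖ ≤ C * (n : ℝ) ^ d := by
    refine (norm_sum_le_of_le _ hφ).trans_eq ?_
    rw [Finset.sum_const, card_box, nsmul_eq_mul, Nat.cast_pow, mul_comm]
  rw [boxAvg, norm_smul, norm_inv, norm_pow, Real.norm_natCast, ← div_eq_inv_mul]
  exact div_le_of_le_mul₀ (by positivity) hC hsum

lemma norm_boxAvg_add_sub_le (hφ : ∀ c, ‖φ c‖ ≤ C) {r : Site d} {R : ℕ} (hr : ∀ j, r j ≤ R)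
    (n : ℕ) :
    ‖boxAvg n (fun c => φ (c + r)) - boxAvg n φ‖ ≤ 2 * C * (#(shell d R n) / (n : ℝ) ^ d) := by
  have hsub : cube r (n - R) ⊆ box d n := fun x hx => mem_box.2 fun j => by
    have := mem_cube.1 hx j
    have := hr j
    omega
  have hcard : #(box d n \ cube r (n - R)) = #(shell d R n) := by
    rw [Finset.card_sdiff_of_subset hsub, card_box, card_cube, card_shell]
  have hshift := norm_sum_sub_sum_le_of_subset (box_mono (d := d) (Nat.sub_le n R))
    (ψ := fun c => φ (c + r)) fun c => hφ _
  have hbase := norm_sum_sub_sum_le_of_subset hsub hφ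
  rw [hcard, sum_cube] at hbase
  have hsum : ‖∑ c ∈ box d n, φ (c + r) - ∑ c ∈ box d n, φ c‖ ≤ 2 * C * #(shell d R n) := by
    calc _ ≤ _ := norm_sub_le_norm_sub_add_norm_sub _ (∑ c ∈ box d (n - R), φ (c + r)) _
      _ ≤ #(shell d R n) * C + #(shell d R n) * C :=
        add_le_add hshift (by rwa [norm_sub_rev])
      _ = _ := by ring
  rw [boxAvg, boxAvg, ← smul_sub, norm_smul, norm_inv, norm_pow, Real.norm_natCast,
    ← div_eq_inv_mul, ← mul_div_assoc]
  gcongr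

lemma norm_boxAvg_boxAvg_sub_le (hφ : ∀ c, ‖φ c‖ ≤ C) {R : ℕ} (hR : 0 < R) (n : ℕ) :
    ‖boxAvg n (fun c => boxAvg R fun r => φ (r + c)) - boxAvg n φ‖ ≤
      2 * C * (#(shell d R n) / (n : ℝ) ^ d) := by
  have hC : 0 ≤ C := (norm_nonneg (φ 0)).trans (hφ 0)
  have hswap : boxAvg n (fun c => boxAvg R fun r => φ (r + c)) - boxAvg n φ =
      boxAvg R fun r : Site d => boxAvg n (fun c => φ (c + r)) - boxAvg n φ := by
    rw [boxAvg_comm, boxAvg_sub, boxAvg_const hR]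
    simp only [add_comm]
  rw [hswap]
  exact norm_boxAvg_le_of_forall_norm_le (by positivity) fun r hr =>
    norm_boxAvg_add_sub_le hφ (fun j => (mem_box.1 hr j).le) n

end Norm

section Real

lemma mul_card_filter_le_boxAvg {ψ : Site d → ℝ} (hψ : ∀ r, 0 ≤ ψ r) (t : ℝ) {n : ℕ} (hn : 0 < n) :
    t * #{r ∈ box d n | t ≤ ψ r} ≤ (n : ℝ) ^ d * boxAvg n ψ := by
  rw [← smul_eq_mul ((n : ℝ) ^ d), pow_smul_boxAvg hn, mul_comm, ← nsmul_eq_mul]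
  exact (Finset.card_nsmul_le_sum _ _ _ fun r hr => (Finset.mem_filter.1 hr).2).trans
    (Finset.sum_le_sum_of_subset_of_nonneg (Finset.filter_subset _ _) fun r _ _ => hψ r)

lemma mul_pow_lt_card_filter_lt {ψ : Site d → ℝ} (hψ : ∀ r, 0 ≤ ψ r) {t δ : ℝ} (ht : 0 < t)
    {n : ℕ} (hn : 0 < n) (havg : boxAvg n ψ < δ * t) :
    (1 - δ) * (n : ℝ) ^ d < #{r ∈ box d n | ψ r < t} := by
  have hmarkov := mul_card_filter_le_boxAvg hψ t hn
  have hsplit := Finset.card_filter_add_card_filter_not (s := box d n) fun r => ψ r < t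
  simp only [not_lt, card_box] at hsplit
  have hlarge : (#{r ∈ box d n | t ≤ ψ r} : ℝ) < δ * (n : ℝ) ^ d := by
    have hnd : (0 : ℝ) < (n : ℝ) ^ d := by positivity
    nlinarith
  have : (#{r ∈ box d n | ψ r < t} : ℝ) + #{r ∈ box d n | t ≤ ψ r} = (n : ℝ) ^ d := by
    exact_mod_cast hsplit
  linarith

end Real

end BoxAverage

section Covering

lemma mem_piFinset_Ico_of_mem_cube {a b x : Site d} {m n : ℕ} (ha : x ∈ cube a m)
    (hb : x ∈ cube b n) (hmn : m ≤ 2 * n) :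
    a ∈ Fintype.piFinset fun j => Finset.Ico (b j + 1 - 2 * n) (b j + n) := by
  refine Fintype.mem_piFinset.2 fun j => Finset.mem_Ico.2 ?_
  have := mem_cube.1 ha j
  have := mem_cube.1 hb j
  omega

lemma card_piFinset_Ico_le (b : Site d) (n : ℕ) :
    #(Fintype.piFinset fun j => Finset.Ico (b j + 1 - 2 * n) (b j + n)) ≤ (3 * n) ^ d := by
  rw [Fintype.card_piFinset]
  refine (Finset.prod_le_pow_card _ _ (3 * n) fun j _ => ?_).trans (by simp)
  rw [Nat.card_Ico]
  omega

lemma exists_pairwiseDisjoint_cube_card_le (B : Finset (Site d)) (ν : Site d → ℕ)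
    (hν : ∀ c ∈ B, 0 < ν c) :
    ∃ U ⊆ B, (U : Set (Site d)).PairwiseDisjoint (fun c => cube c (ν c)) ∧
      #B ≤ 3 ^ d * ∑ b ∈ U, ν b ^ d := by
  obtain ⟨u, huB, hdisj, hcov⟩ := Vitali.exists_disjoint_subfamily_covering_enlargement
    (fun c => (cube c (ν c) : Set (Site d))) (B : Set (Site d)) (fun c => (ν c : ℝ)) 2
    one_lt_two (fun _ _ => Nat.cast_nonneg _) (B.sup ν : ℕ)
    (fun c hc => Nat.cast_le.2 (Finset.le_sup hc))
    (fun c hc => ⟨c, mem_cube.2 fun j => ⟨le_rfl, Nat.lt_add_of_pos_right (hν c hc)⟩⟩)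
  lift u to Finset (Site d) using B.finite_toSet.subset huB
  refine ⟨u, huB, fun a ha b hb hab => Finset.disjoint_coe.1 (hdisj ha hb hab), ?_⟩
  have hsub : B ⊆ u.biUnion fun b =>
      Fintype.piFinset fun j => Finset.Ico (b j + 1 - 2 * ν b) (b j + ν b) := by
    intro a ha
    obtain ⟨b, hb, ⟨x, hxa, hxb⟩, hle⟩ := hcov a ha
    exact Finset.mem_biUnion.2
      ⟨b, hb, mem_piFinset_Ico_of_mem_cube hxa hxb (by exact_mod_cast hle)⟩
  calc #B ≤ ∑ b ∈ u, (3 * ν b) ^ d := (Finset.card_le_card hsub).trans <|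
        Finset.card_biUnion_le.trans <| Finset.sum_le_sum fun b _ => card_piFinset_Ico_le b _
    _ = 3 ^ d * ∑ b ∈ u, ν b ^ d := by simp only [mul_pow, Finset.mul_sum]

lemma mul_card_le_of_forall_exists_lt_boxAvg {φ : Site d → ℝ} (hφ : ∀ c, 0 ≤ φ c) {t : ℝ}
    (ht : 0 ≤ t) {B : Finset (Site d)} {N : ℕ} (hBN : B ⊆ box d N)
    (hB : ∀ c ∈ B, ∃ n ∈ Finset.Icc 1 N, t < boxAvg n fun a => φ (a + c)) :
    t * #B ≤ 3 ^ d * ∑ c ∈ box d (2 * N), φ c := by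
  choose! ν hν hlt using hB
  obtain ⟨U, hUB, hdisj, hcard⟩ := exists_pairwiseDisjoint_cube_card_le B ν fun c hc =>
    (Finset.mem_Icc.1 (hν c hc)).1
  have hlarge : ∀ b ∈ U, t * (ν b : ℝ) ^ d ≤ ∑ x ∈ cube b (ν b), φ x := fun b hb => by
    rw [sum_cube, ← pow_smul_boxAvg (Finset.mem_Icc.1 (hν b (hUB hb))).1, smul_eq_mul, mul_comm]
    gcongr
    exact (hlt b (hUB hb)).le
  have hsub : U.biUnion (fun b => cube b (ν b)) ⊆ box d (2 * N) := by
    refine Finset.biUnion_subset.2 fun b hb x hx => mem_box.2 fun j => ?_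
    have := mem_cube.1 hx j
    have := mem_box.1 (hBN (hUB hb)) j
    have := (Finset.mem_Icc.1 (hν b (hUB hb))).2
    omega
  calc t * #B ≤ t * (3 ^ d * ∑ b ∈ U, (ν b : ℝ) ^ d) := by gcongr; exact_mod_cast hcard
    _ = 3 ^ d * ∑ b ∈ U, t * (ν b : ℝ) ^ d := by rw [← Finset.mul_sum, mul_left_comm]
    _ ≤ 3 ^ d * ∑ b ∈ U, ∑ x ∈ cube b (ν b), φ x := by gcongr with b hb; exact hlarge b hb
    _ = 3 ^ d * ∑ x ∈ U.biUnion (fun b => cube b (ν b)), φ x := by rw [Finset.sum_biUnion hdisj]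
    _ ≤ 3 ^ d * ∑ c ∈ box d (2 * N), φ c := by
      gcongr
      exact fun c _ _ => hφ c

end Covering

section Action

variable {Ω : Type*} [AddAction (Site d) Ω]

/-- The average of `f` over the part of the orbit of `x` indexed by `Λ_n`. -/
noncomputable def orbitAvg (d : ℕ) {Ω : Type*} [AddAction (Site d) Ω] (n : ℕ) (f : Ω → ℝ) (x : Ω) :
    ℝ :=
  boxAvg n fun c : Site d => f (c +ᵥ x)

lemma orbitAvg_vadd (n : ℕ) (f : Ω → ℝ) (c : Site d) (x : Ω) :
    orbitAvg d n f (c +ᵥ x) = boxAvg n fun a => f ((a + c) +ᵥ x) := by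
  simp only [orbitAvg, vadd_vadd]

lemma mul_orbitAvg_indicator_le {f : Ω → ℝ} (hf : ∀ x, 0 ≤ f x) {t : ℝ} (ht : 0 ≤ t) {N : ℕ}
    (hN : 0 < N) (x : Ω) :
    t * orbitAvg d N
        ({y | ∃ n ∈ Finset.Icc 1 N, t < orbitAvg d n f y}.indicator fun _ => 1) x ≤
      6 ^ d * orbitAvg d (2 * N) f x := by
  classical
  set E := {y | ∃ n ∈ Finset.Icc 1 N, t < orbitAvg d n f y}
  have hcount : (N : ℝ) ^ d * orbitAvg d N (E.indicator fun _ => 1) x =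
      #{c ∈ box d N | c +ᵥ x ∈ E} := by
    rw [← smul_eq_mul, orbitAvg, pow_smul_boxAvg hN]
    simp [Set.indicator_apply, Finset.card_filter]
  have hsum : ((2 * N : ℕ) : ℝ) ^ d * orbitAvg d (2 * N) f x =
      ∑ c ∈ box d (2 * N), f (c +ᵥ x) := pow_smul_boxAvg (by positivity) _
  have hcover : t * #{c ∈ box d N | c +ᵥ x ∈ E} ≤ 3 ^ d * ∑ c ∈ box d (2 * N), f (c +ᵥ x) := by
    refine mul_card_le_of_forall_exists_lt_boxAvg (fun c => hf _) ht (Finset.filter_subset _ _) ?_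
    intro c hc
    obtain ⟨n, hn, hlt⟩ := (Finset.mem_filter.1 hc).2
    exact ⟨n, hn, by rwa [orbitAvg_vadd] at hlt⟩
  have hNd : (0 : ℝ) < (N : ℝ) ^ d := by positivity
  refine le_of_mul_le_mul_left ?_ hNd
  calc (N : ℝ) ^ d * (t * orbitAvg d N (E.indicator fun _ => 1) x)
      = t * #{c ∈ box d N | c +ᵥ x ∈ E} := by rw [mul_left_comm, hcount]
    _ ≤ 3 ^ d * (((2 * N : ℕ) : ℝ) ^ d * orbitAvg d (2 * N) f x) := by rwa [hsum]
    _ = (N : ℝ) ^ d * (6 ^ d * orbitAvg d (2 * N) f x) := by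
      rw [Nat.cast_mul, mul_pow, show (6 : ℝ) = 3 * 2 by norm_num, mul_pow]
      push_cast
      ring

variable [MeasurableSpace Ω] {μ : Measure Ω} {f : Ω → ℝ} [MeasurableConstVAdd (Site d) Ω]

lemma measurable_orbitAvg (hf : Measurable f) (n : ℕ) : Measurable (orbitAvg d n f) := by
  unfold orbitAvg boxAvg
  refine Measurable.fun_const_smul (Finset.measurable_fun_sum _ fun c _ => ?_) _
  exact hf.comp (measurable_const_vadd c)

variable [VAddInvariantMeasure (Site d) Ω μ]

lemma integrable_comp_vadd (hf : Integrable f μ) (c : Site d) :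
    Integrable (fun x => f (c +ᵥ x)) μ :=
  (measurePreserving_vadd c μ).integrable_comp_of_integrable hf

lemma integral_comp_vadd (hf : AEStronglyMeasurable f μ) (c : Site d) :
    ∫ x, f (c +ᵥ x) ∂μ = ∫ x, f x ∂μ := by
  have hmap := (measurePreserving_vadd c μ).map_eq
  rw [← hmap] at hf
  rw [← integral_map (measurable_const_vadd c).aemeasurable hf, hmap]

lemma integrable_orbitAvg (hf : Integrable f μ) (n : ℕ) : Integrable (orbitAvg d n f) μ := by
  unfold orbitAvg boxAvg
  exact Integrable.fun_smul _ (integrable_finsetSum _ fun c _ => integrable_comp_vadd hf c)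

lemma integral_orbitAvg (hf : Integrable f μ) {n : ℕ} (hn : 0 < n) :
    ∫ x, orbitAvg d n f x ∂μ = ∫ x, f x ∂μ := by
  calc ∫ x, orbitAvg d n f x ∂μ = boxAvg n fun c : Site d => ∫ x, f (c +ᵥ x) ∂μ := by
        simp only [orbitAvg, boxAvg]
        rw [integral_smul, integral_finsetSum _ fun c _ => integrable_comp_vadd hf c]
    _ = ∫ x, f x ∂μ := by
        simp only [integral_comp_vadd hf.aestronglyMeasurable]
        exact boxAvg_const hn _

lemma mul_measureReal_exists_mem_Icc_lt_orbitAvg_le [IsFiniteMeasure μ] (hf : Measurable f)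
    (hf0 : ∀ x, 0 ≤ f x) (hfi : Integrable f μ) {t : ℝ} (ht : 0 ≤ t) {N : ℕ} (hN : 0 < N) :
    t * μ.real {x | ∃ n ∈ Finset.Icc 1 N, t < orbitAvg d n f x} ≤ 6 ^ d * ∫ x, f x ∂μ := by
  have hE : MeasurableSet {x | ∃ n ∈ Finset.Icc 1 N, t < orbitAvg d n f x} := by
    have hunion : {x | ∃ n ∈ Finset.Icc 1 N, t < orbitAvg d n f x} =
        ⋃ n ∈ Finset.Icc 1 N, {x | t < orbitAvg d n f x} := by
      ext x
      simp
    rw [hunion]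
    exact Finset.measurableSet_biUnion _ fun n _ =>
      measurableSet_lt measurable_const (measurable_orbitAvg hf n)
  have hEi := (integrable_const (μ := μ) (1 : ℝ)).indicator hE
  calc t * μ.real {x | ∃ n ∈ Finset.Icc 1 N, t < orbitAvg d n f x}
      = ∫ x, t * orbitAvg d N
          ({y | ∃ n ∈ Finset.Icc 1 N, t < orbitAvg d n f y}.indicator fun _ => 1) x ∂μ := by
        rw [integral_const_mul, integral_orbitAvg hEi hN, integral_indicator_const _ hE,
          smul_eq_mul, mul_one]
    _ ≤ ∫ x, 6 ^ d * orbitAvg d (2 * N) f x ∂μ :=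
        integral_mono ((integrable_orbitAvg hEi N).const_mul _)
          ((integrable_orbitAvg hfi _).const_mul _) (mul_orbitAvg_indicator_le hf0 ht hN)
    _ = 6 ^ d * ∫ x, f x ∂μ := by
        rw [integral_const_mul, integral_orbitAvg hfi (by positivity)]

lemma mul_measureReal_exists_lt_orbitAvg_le [IsFiniteMeasure μ] (hf : Measurable f)
    (hf0 : ∀ x, 0 ≤ f x) (hfi : Integrable f μ) {t : ℝ} (ht : 0 ≤ t) :
    t * μ.real {x | ∃ n > 0, t < orbitAvg d n f x} ≤ 6 ^ d * ∫ x, f x ∂μ := by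
  have hunion : {x | ∃ n > 0, t < orbitAvg d n f x} =
      ⋃ N : ℕ, {x | ∃ n ∈ Finset.Icc 1 (N + 1), t < orbitAvg d n f x} := by
    ext x
    simp only [Set.mem_ofPred_eq, Set.mem_iUnion, Finset.mem_Icc]
    constructor
    · rintro ⟨n, hn, hlt⟩
      exact ⟨n, n, ⟨hn, n.le_succ⟩, hlt⟩
    · rintro ⟨N, n, ⟨hn, -⟩, hlt⟩
      exact ⟨n, hn, hlt⟩
  have hmono : Monotone fun N : ℕ => {x | ∃ n ∈ Finset.Icc 1 (N + 1), t < orbitAvg d n f x} :=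
    fun M N hMN x ⟨n, hn, hlt⟩ => ⟨n, Finset.Icc_subset_Icc_right (by omega) hn, hlt⟩
  have hlim := (ENNReal.tendsto_toReal (measure_ne_top μ _)).comp
    (tendsto_measure_iUnion_atTop (μ := μ) hmono)
  rw [← hunion] at hlim
  exact le_of_tendsto (hlim.const_mul t) <| Eventually.of_forall fun N =>
    mul_measureReal_exists_mem_Icc_lt_orbitAvg_le hf hf0 hfi ht N.succ_pos

end Action

section MeanErgodic

section Module

variable {E : Type*} [NormedAddCommGroup E] [NormedSpace ℝ E] {U : Site d → E →ₗ[ℝ] E}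

/-- The vectors whose averages along the family `U` of linear maps tend to zero. -/
def nullVectors (U : Site d → E →ₗ[ℝ] E) : Submodule ℝ E where
  carrier := {z | Tendsto (fun n => boxAvg n fun c => U c z) atTop (𝓝 0)}
  zero_mem' := by simp [boxAvg]
  add_mem' {y z} hy hz := by simpa [boxAvg_add] using Tendsto.add hy hz
  smul_mem' a z hz := by simpa [boxAvg_smul] using Tendsto.const_smul hz a

lemma mem_nullVectors {z : E} :
    z ∈ nullVectors U ↔ Tendsto (fun n => boxAvg n fun c => U c z) atTop (𝓝 0) :=
  Iff.rfl

lemma isClosed_nullVectors (hU : ∀ r z, ‖U r z‖ ≤ ‖z‖) : IsClosed (nullVectors U : Set E) := by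
  have hlip (n : ℕ) : LipschitzWith 1 fun z => boxAvg n fun c => U c z :=
    LipschitzWith.of_dist_le_mul fun y z => by
      rw [NNReal.coe_one, one_mul, dist_eq_norm, dist_eq_norm, ← boxAvg_sub]
      refine norm_boxAvg_le_of_forall_norm_le (norm_nonneg _) fun c _ => ?_
      rw [← map_sub]
      exact hU c _
  exact (LipschitzWith.uniformEquicontinuous _ 1 hlip).equicontinuous.isClosed_setOfPred_tendsto
    continuous_const

lemma map_sub_self_mem_nullVectors (hU : ∀ r z, ‖U r z‖ ≤ ‖z‖)
    (hUadd : ∀ r s z, U (r + s) z = U r (U s z)) (r : Site d) (z : E) :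
    U r z - z ∈ nullVectors U := by
  rw [mem_nullVectors]
  have hbound (n : ℕ) : ‖boxAvg n fun c => U c (U r z - z)‖ ≤
      2 * ‖z‖ * (#(shell d (∑ j, r j) n) / (n : ℝ) ^ d) := by
    simp only [map_sub, ← hUadd, boxAvg_sub]
    exact norm_boxAvg_add_sub_le (fun c => hU c z)
      (fun j => Finset.single_le_sum (fun _ _ => Nat.zero_le _) (Finset.mem_univ j)) n
  refine squeeze_zero_norm hbound ?_
  simpa using (tendsto_card_shell_div d (∑ j, r j)).const_mul (2 * ‖z‖)

end Module

variable {H : Type*} [NormedAddCommGroup H] [InnerProductSpace ℝ H] [CompleteSpace H]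
  {U : Site d → H →ₗ[ℝ] H}

lemma mem_nullVectors_of_forall_inner_eq_zero (hU : ∀ r z, ‖U r z‖ ≤ ‖z‖)
    (hUadd : ∀ r s z, U (r + s) z = U r (U s z)) {z : H}
    (hz : ∀ g, (∀ r, U r g = g) → inner ℝ g z = 0) : z ∈ nullVectors U := by
  -- `U r g - g ⊥ g` gives `⟪U r g, g⟫ = ‖g‖²`, which forces `U r g = g` as `U r` is a contraction.
  have hfixed : ∀ g ∈ (nullVectors U)ᗮ, ∀ r, U r g = g := fun g hg r =>
    have horth := hg _ (map_sub_self_mem_nullVectors hU hUadd r g)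
    eq_of_norm_le_re_inner_eq_norm_sq (𝕜 := ℝ) (hU r g) <| by
      rw [inner_sub_left, sub_eq_zero] at horth
      simp [horth]
  have : CompleteSpace (nullVectors U) := (isClosed_nullVectors hU).completeSpace_coe
  rw [← (nullVectors U).orthogonal_orthogonal]
  exact fun g hg => hz g (hfixed g hg)

end MeanErgodic

section Koopman

variable {Ω : Type*} [AddAction (Site d) Ω] [MeasurableSpace Ω] {μ : Measure Ω} {f : Ω → ℝ}
  [MeasurableConstVAdd (Site d) Ω]

section Invariant

variable [VAddInvariantMeasure (Site d) Ω μ]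

/-- The Koopman operator `F ↦ F ∘ (r +ᵥ ·)` on `L²(μ)`. -/
noncomputable def koopman (μ : Measure Ω) [VAddInvariantMeasure (Site d) Ω μ] (r : Site d) :
    Lp ℝ 2 μ →ₗ[ℝ] Lp ℝ 2 μ :=
  Lp.compMeasurePreservingₗ ℝ (r +ᵥ ·) (measurePreserving_vadd r μ)

lemma coeFn_koopman (r : Site d) (F : Lp ℝ 2 μ) : koopman μ r F =ᵐ[μ] fun x => F (r +ᵥ x) :=
  Lp.coeFn_compMeasurePreserving F (measurePreserving_vadd r μ)

lemma norm_koopman (r : Site d) (F : Lp ℝ 2 μ) : ‖koopman μ r F‖ = ‖F‖ :=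
  Lp.norm_compMeasurePreserving F (measurePreserving_vadd r μ)

lemma koopman_add (r s : Site d) (F : Lp ℝ 2 μ) :
    koopman μ (r + s) F = koopman μ r (koopman μ s F) := by
  refine Eq.trans ?_ (Lp.compMeasurePreserving_comp_apply F (measurePreserving_vadd s μ)
    (measurePreserving_vadd r μ))
  have : (fun x : Ω => (r + s) +ᵥ x) = (s +ᵥ ·) ∘ (r +ᵥ ·) := by
    ext x
    rw [Function.comp_apply, vadd_vadd, add_comm]
  simp only [koopman, this]
  rfl

lemma coeFn_boxAvg_koopman_toLp (hf : MemLp f 2 μ) (n : ℕ) :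
    (boxAvg n fun c : Site d => koopman μ c hf.toLp : Lp ℝ 2 μ) =ᵐ[μ] orbitAvg d n f := by
  have hterm : ∀ c : Site d, koopman μ c hf.toLp =ᵐ[μ] fun x => f (c +ᵥ x) := fun c =>
    (coeFn_koopman c _).trans
      ((measurePreserving_vadd c μ).quasiMeasurePreserving.ae_eq_comp hf.coeFn_toLp)
  filter_upwards [Lp.coeFn_smul ((n : ℝ) ^ d)⁻¹ (∑ c ∈ box d n, koopman μ c hf.toLp),
    Lp.coeFn_fun_finsetSum (box d n) fun c => koopman μ c hf.toLp,
    ae_all_iff.2 hterm] with x hsmul hsum hx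
  simp only [boxAvg, orbitAvg, hsmul, Pi.smul_apply, hsum, hx]

end Invariant

variable [ErgodicVAdd (Site d) Ω μ]

lemma exists_ae_eq_const_of_forall_koopman_eq {F : Lp ℝ 2 μ}
    (hF : ∀ r : Site d, koopman μ r F = F) : ∃ a, F =ᵐ[μ] fun _ => a := by
  refine exists_eventuallyEq_const_of_forall_separating MeasurableSet fun S hS => ?_
  have hFS := (Lp.stronglyMeasurable F).measurable hS
  refine eventuallyConst_set.1 <|
    aeconst_of_forall_preimage_vadd_ae_eq (Site d) hFS.nullMeasurableSet fun r => ?_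
  have hcomp := coeFn_koopman r F
  rw [hF] at hcomp
  exact hcomp.symm.preimage S

lemma toLp_mem_nullVectors_koopman (hf : MemLp f 2 μ) (hf0 : ∫ x, f x ∂μ = 0) :
    hf.toLp ∈ nullVectors (koopman (d := d) μ) := by
  refine mem_nullVectors_of_forall_inner_eq_zero (fun r F => (norm_koopman r F).le) koopman_add
    fun G hG => ?_
  obtain ⟨b, hb⟩ := exists_ae_eq_const_of_forall_koopman_eq hG
  calc inner ℝ G hf.toLp = ∫ x, f x * b ∂μ := by
        rw [L2.inner_def]
        refine integral_congr_ae ?_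
        filter_upwards [hb, hf.coeFn_toLp] with x hGx hfx
        simp [hGx, hfx]
    _ = 0 := by rw [integral_mul_const, hf0, zero_mul]

lemma integral_abs_le_norm [IsProbabilityMeasure μ] (F : Lp ℝ 2 μ) : ∫ x, |F x| ∂μ ≤ ‖F‖ := by
  have hF := Lp.aestronglyMeasurable F
  calc ∫ x, |F x| ∂μ = (eLpNorm F 1 μ).toReal := by
        rw [toReal_eLpNorm hF, lpNorm_one_eq_integral_norm hF]
        rfl
    _ ≤ (eLpNorm F 2 μ).toReal := ENNReal.toReal_mono (Lp.eLpNorm_ne_top F) <|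
        eLpNorm_le_eLpNorm_of_exponent_le one_le_two hF
    _ = ‖F‖ := (Lp.norm_def F).symm

lemma tendsto_integral_abs_orbitAvg_sub_integral [IsProbabilityMeasure μ] (hf : MemLp f 2 μ) :
    Tendsto (fun n => ∫ x, |orbitAvg d n f x - ∫ y, f y ∂μ| ∂μ) atTop (𝓝 0) := by
  have hg : MemLp (fun x => f x - ∫ y, f y ∂μ) 2 μ := hf.sub (memLp_const _)
  have hg0 : ∫ x, (f x - ∫ y, f y ∂μ) ∂μ = 0 := by
    rw [integral_sub (hf.integrable one_le_two) (integrable_const _)]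
    simp
  have hnull := (mem_nullVectors.1 (toLp_mem_nullVectors_koopman (d := d) hg hg0)).norm
  rw [norm_zero] at hnull
  refine squeeze_zero' (.of_forall fun n => integral_nonneg fun x => abs_nonneg _) ?_ hnull
  filter_upwards [eventually_gt_atTop 0] with n hn
  refine le_trans (le_of_eq ?_) (integral_abs_le_norm _)
  refine integral_congr_ae ?_
  filter_upwards [coeFn_boxAvg_koopman_toLp (d := d) hg n] with x hx
  rw [hx, orbitAvg, orbitAvg, boxAvg_sub, boxAvg_const hn]

end Koopman

section PointwiseErgodic

variable {Ω : Type*} [AddAction (Site d) Ω] {f : Ω → ℝ} {C : ℝ}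

lemma abs_orbitAvg_le (hC : ∀ x, |f x| ≤ C) (n : ℕ) (x : Ω) : |orbitAvg d n f x| ≤ C :=
  norm_boxAvg_le_of_forall_norm_le (φ := fun c : Site d => f (c +ᵥ x)) ((abs_nonneg _).trans (hC x))
    fun _ _ => hC _

lemma abs_orbitAvg_sub_le (hC : ∀ x, |f x| ≤ C) (a : ℝ) {M n : ℕ} (hM : 0 < M) (hn : 0 < n)
    (x : Ω) :
    |orbitAvg d n f x - a| ≤
      orbitAvg d n (fun y => |orbitAvg d M f y - a|) x +
        2 * C * (#(shell d M n) / (n : ℝ) ^ d) := by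
  have hshell : |orbitAvg d n (orbitAvg d M f) x - orbitAvg d n f x| ≤
      2 * C * (#(shell d M n) / (n : ℝ) ^ d) := by
    simpa only [orbitAvg, vadd_vadd, Real.norm_eq_abs] using
      norm_boxAvg_boxAvg_sub_le (φ := fun c : Site d => f (c +ᵥ x)) (fun c => hC _) hM n
  have hmean : |orbitAvg d n (orbitAvg d M f) x - a| ≤
      orbitAvg d n (fun y => |orbitAvg d M f y - a|) x := by
    have := norm_boxAvg_le n fun c : Site d => orbitAvg d M f (c +ᵥ x) - a
    rwa [boxAvg_sub, boxAvg_const hn] at this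
  calc |orbitAvg d n f x - a|
      ≤ |orbitAvg d n f x - orbitAvg d n (orbitAvg d M f) x| +
          |orbitAvg d n (orbitAvg d M f) x - a| := abs_sub_le _ _ _
    _ ≤ _ := by rw [abs_sub_comm, add_comm]; gcongr

variable [MeasurableSpace Ω] [MeasurableConstVAdd (Site d) Ω] {μ : Measure Ω}
  [IsProbabilityMeasure μ] [ErgodicVAdd (Site d) Ω μ]

lemma ae_eventually_abs_orbitAvg_sub_lt (hf : Measurable f) (hC : ∀ x, |f x| ≤ C) {η : ℝ}
    (hη : 0 < η) : ∀ᵐ x ∂μ, ∀ᶠ n in atTop, |orbitAvg d n f x - ∫ y, f y ∂μ| < η := by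
  set a := ∫ y, f y ∂μ
  set bad := {x | ∃ᶠ n in atTop, η ≤ |orbitAvg d n f x - a|}
  have hbad_sub (M : ℕ) (hM : 0 < M) :
      bad ⊆ {x | ∃ n > 0, η / 2 < orbitAvg d n (fun y => |orbitAvg d M f y - a|) x} := by
    intro x hx
    have hshell : ∀ᶠ n : ℕ in atTop, 2 * C * (#(shell d M n) / (n : ℝ) ^ d) < η / 2 := by
      refine Tendsto.eventually_lt_const (half_pos hη) ?_
      simpa using (tendsto_card_shell_div d M).const_mul (2 * C)
    obtain ⟨n, hnη, hnM, hn⟩ :=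
      (hx.and_eventually (hshell.and (eventually_gt_atTop 0))).exists
    exact ⟨n, hn, by linarith [abs_orbitAvg_sub_le (d := d) hC a hM hn x]⟩
  have hbad_le (M : ℕ) (hM : 0 < M) :
      η / 2 * μ.real bad ≤ 6 ^ d * ∫ x, |orbitAvg d M f x - a| ∂μ := by
    have hg : Measurable fun x => |orbitAvg d M f x - a| :=
      ((measurable_orbitAvg (d := d) hf M).sub_const a).abs
    have hfi : Integrable f μ := Integrable.of_bound hf.aestronglyMeasurable C (.of_forall hC)
    calc η / 2 * μ.real bad ≤ η / 2 * μ.real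
            {x | ∃ n > 0, η / 2 < orbitAvg d n (fun y => |orbitAvg d M f y - a|) x} :=
          mul_le_mul_of_nonneg_left (measureReal_mono (hbad_sub M hM)) (half_pos hη).le
      _ ≤ 6 ^ d * ∫ x, |orbitAvg d M f x - a| ∂μ :=
          mul_measureReal_exists_lt_orbitAvg_le (d := d) hg (fun x => abs_nonneg _)
            ((integrable_orbitAvg (d := d) hfi M).sub (integrable_const a)).abs (half_pos hη).le
  have hlim := (tendsto_integral_abs_orbitAvg_sub_integral (d := d)
    (MemLp.of_bound (p := 2) (μ := μ) hf.aestronglyMeasurable C (.of_forall hC))).const_mul (6 ^ d)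
  rw [mul_zero] at hlim
  have hzero : η / 2 * μ.real bad ≤ 0 :=
    ge_of_tendsto hlim <| (eventually_gt_atTop 0).mono hbad_le
  have hnull : μ bad = 0 := by
    refine (measureReal_eq_zero_iff).1 (le_antisymm ?_ measureReal_nonneg)
    exact nonpos_of_mul_nonpos_right hzero (half_pos hη)
  filter_upwards [measure_eq_zero_iff_ae_notMem.1 hnull] with x hx
  simpa [bad, not_frequently] using hx

lemma ae_tendsto_orbitAvg (hf : Measurable f) (hC : ∀ x, |f x| ≤ C) :
    ∀ᵐ x ∂μ, Tendsto (fun n => orbitAvg d n f x) atTop (𝓝 (∫ y, f y ∂μ)) := by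
  have hall : ∀ᵐ x ∂μ, ∀ m : ℕ, ∀ᶠ n in atTop,
      |orbitAvg d n f x - ∫ y, f y ∂μ| < 1 / ((m : ℝ) + 1) :=
    ae_all_iff.2 fun m => ae_eventually_abs_orbitAvg_sub_lt hf hC Nat.one_div_pos_of_nat
  filter_upwards [hall] with x hx
  exact Metric.nhds_basis_ball_inv_nat_succ.tendsto_right_iff.2 fun m _ => hx m

lemma eventually_ae_eventually_lt_card_filter_abs_orbitAvg_sub_lt (hf : Measurable f)
    (hC : ∀ x, |f x| ≤ C) {ε δ : ℝ} (hε : 0 < ε) (hδ : 0 < δ) :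
    ∀ᶠ k : ℕ in atTop, ∀ᵐ x ∂μ, ∀ᶠ n : ℕ in atTop, (1 - δ) * (n : ℝ) ^ d <
      #{r ∈ box d n | |orbitAvg d k f (k • r +ᵥ x) - ∫ y, f y ∂μ| < ε} := by
  set a := ∫ y, f y ∂μ
  have hmean := tendsto_integral_abs_orbitAvg_sub_integral (d := d)
    (MemLp.of_bound (p := 2) (μ := μ) hf.aestronglyMeasurable C (.of_forall hC))
  obtain ⟨M, hMint, hM⟩ := ((hmean.eventually_lt_const (mul_pos hδ (half_pos hε))).and
    (eventually_gt_atTop 0)).exists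
  set g := fun x => |orbitAvg d M f x - a|
  have hshell : ∀ᶠ k : ℕ in atTop, 2 * C * (#(shell d M k) / (k : ℝ) ^ d) < ε / 2 := by
    refine Tendsto.eventually_lt_const (half_pos hε) ?_
    simpa using (tendsto_card_shell_div d M).const_mul (2 * C)
  filter_upwards [hshell, eventually_gt_atTop 0] with k hk hk0
  have hgC : ∀ x, |g x| ≤ C + |a| := fun x => by
    rw [abs_abs]
    exact (abs_sub _ _).trans (add_le_add_left (abs_orbitAvg_le (d := d) hC M x) _)
  filter_upwards [ae_tendsto_orbitAvg (d := d) (μ := μ)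
    ((measurable_orbitAvg (d := d) hf M).sub_const a).abs hgC] with x hx
  have hsub : Tendsto (fun n => k * n) atTop atTop := tendsto_id.const_mul_atTop' hk0
  filter_upwards [(hx.comp hsub).eventually_lt_const hMint, eventually_gt_atTop 0] with n hn hn0
  have havg : boxAvg n (fun r : Site d => orbitAvg d k g (k • r +ᵥ x)) < δ * (ε / 2) := by
    simp only [orbitAvg_vadd]
    rwa [boxAvg_boxAvg_add_smul hk0 n fun c : Site d => g (c +ᵥ x)]
  have hg0 : ∀ y, 0 ≤ orbitAvg d k g y := fun y =>
    smul_nonneg (by positivity) (Finset.sum_nonneg fun _ _ => abs_nonneg _)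
  refine (mul_pow_lt_card_filter_lt (fun r => hg0 _) (half_pos hε) hn0 havg).trans_le ?_
  refine Nat.cast_le.2 <| Finset.card_le_card <| Finset.monotone_filter_right _ fun r _ hr => ?_
  linarith [abs_orbitAvg_sub_le (d := d) hC a hM hk0 (k • r +ᵥ x)]

end PointwiseErgodic

section Shift

section Invariant

variable {Ω : Type*} [AddAction (Site d) Ω] [MeasurableSpace Ω]
  [MeasurableConstVAdd (Site d) Ω] {μ : Measure Ω} [VAddInvariantMeasure (Site d) Ω μ]

lemma map_add_right_atTop (r : Site d) : map (· + r) atTop = (atTop : Filter (Site d)) :=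
  map_atTop_eq_of_gc (· - r) r (fun _ _ h => add_le_add_left h r)
    (fun _ _ hb => (le_tsub_iff_right hb).symm) fun _ hb => (tsub_add_cancel_of_le hb).ge

lemma measurableSet_eventually_vadd_mem {S : Set Ω} (hS : MeasurableSet S) :
    MeasurableSet {x | ∀ᶠ c : Site d in atTop, c +ᵥ x ∈ S} := by
  have hunion : {x | ∀ᶠ c : Site d in atTop, c +ᵥ x ∈ S} =
      ⋃ R : Site d, ⋂ c ≥ R, (c +ᵥ ·) ⁻¹' S := by
    ext x
    simp [eventually_atTop]
  rw [hunion]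
  exact .iUnion fun R => .iInter fun c => .iInter fun _ => measurable_const_vadd c hS

lemma ergodicVAdd_of_forall_preimage_vadd_eq
    (h : ∀ E : Set Ω, MeasurableSet E → (∀ r : Site d, (r +ᵥ ·) ⁻¹' E = E) →
      EventuallyConst E (ae μ)) :
    ErgodicVAdd (Site d) Ω μ where
  aeconst_of_forall_preimage_vadd_ae_eq {S} hS hinv := by
    -- An a.e. invariant set is a.e. equal to the strictly invariant set of points whose orbit is
    -- eventually contained in it.
    refine (h _ (measurableSet_eventually_vadd_mem (d := d) hS) fun r => ?_).congr ?_
    · ext x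
      simp only [Set.mem_preimage, Set.mem_ofPred_eq, vadd_vadd]
      rw [← eventually_map (m := (· + r)) (P := fun c => c +ᵥ x ∈ S), map_add_right_atTop]
    · refine eventuallyEq_set.2 ?_
      filter_upwards [ae_all_iff.2 fun r => (hinv r).mem_iff] with x hx
      simp only [Set.mem_preimage] at hx
      simp only [hx, eventually_const]

end Invariant

/-- The lattice shifts as an additive action: `r +ᵥ x` is `σ_r x`. -/
instance : AddAction (Site d) (Config A d) where
  vadd := shift
  zero_vadd x := by
    ext1 i
    exact congrArg x (add_zero i)
  add_vadd r s x := by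
    ext1 i
    exact congrArg x (add_assoc i r s).symm

instance : MeasurableConstVAdd (Site d) (Config A d) where
  measurable_const_vadd _ := measurable_pi_lambda _ fun _ => measurable_pi_apply _

lemma Stationary.vaddInvariantMeasure {μ : Measure (Config A d)} (hμ : Stationary μ) :
    VAddInvariantMeasure (Site d) (Config A d) μ where
  measure_preimage_vadd r _ hS :=
    (MeasurePreserving.mk (measurable_const_vadd r) (hμ r)).measure_preimage hS.nullMeasurableSet

lemma ErgodicShift.ergodicVAdd {μ : Measure (Config A d)} [IsProbabilityMeasure μ]
    (hμ : ErgodicShift μ) : ErgodicVAdd (Site d) (Config A d) μ := by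
  have := hμ.1.vaddInvariantMeasure
  refine ergodicVAdd_of_forall_preimage_vadd_eq fun E hE hinv => eventuallyConst_set.2 ?_
  rcases hμ.2 E hE hinv with h0 | h1
  · exact .inr (measure_eq_zero_iff_ae_notMem.1 h0)
  · exact .inl ((mem_ae_iff_prob_eq_one hE).2 h1)

end Shift

section Words

lemma wordAt_vadd (x : Config A d) (k : ℕ) (r c : Site d) :
    wordAt (r +ᵥ x) k c = wordAt x k (c + r) := by
  ext1 i
  exact congrArg x <| funext fun j => add_right_comm _ _ _

lemma wordAt_eq_wordAt_iff {x y : Config A d} {k : ℕ} {c : Site d} :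
    wordAt x k c = wordAt y k c ↔ ∀ a ∈ cube c k, x a = y a := by
  constructor
  · intro h a ha
    have hword := congrFun h fun j => ⟨a j - c j, by have := mem_cube.1 ha j; omega⟩
    have hsite : (fun j => c j + (a j - c j)) = a :=
      funext fun j => Nat.add_sub_cancel' (mem_cube.1 ha j).1
    simpa only [wordAt, hsite] using hword
  · intro h
    ext1 i
    exact h _ (mem_cube.2 fun j => ⟨Nat.le_add_right _ _, Nat.add_lt_add_left (i j).2 _⟩)

lemma measurable_wordAt (k : ℕ) (c : Site d) : Measurable fun x : Config A d => wordAt x k c :=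
  measurable_pi_lambda _ fun _ => measurable_pi_apply _

variable {μ : Measure (Config A d)}

lemma wordDist_nonneg (k : ℕ) (w : Word A d k) : 0 ≤ wordDist μ k w := measureReal_nonneg

lemma wordDist_le_one [IsProbabilityMeasure μ] (k : ℕ) (w : Word A d k) : wordDist μ k w ≤ 1 :=
  measureReal_le_one

lemma integral_comp_wordAt [IsFiniteMeasure μ] (k : ℕ) (g : Word A d k → ℝ) :
    ∫ x, g (wordAt x k 0) ∂μ = ∑ w, wordDist μ k w * g w := by
  have hword := measurable_wordAt (A := A) k (0 : Site d)
  rw [← integral_map hword.aemeasurable (measurable_of_finite g).aestronglyMeasurable,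
    integral_fintype (Integrable.of_finite)]
  refine Finset.sum_congr rfl fun w _ => ?_
  rw [measureReal_def, Measure.map_apply hword (measurableSet_singleton w), smul_eq_mul]
  rfl

lemma sum_wordDist [IsProbabilityMeasure μ] (k : ℕ) : ∑ w, wordDist μ k w = 1 := by
  simpa using (integral_comp_wordAt (μ := μ) k fun _ => 1).symm

lemma ae_wordDist_wordAt_zero_pos [IsFiniteMeasure μ] (m : ℕ) :
    ∀ᵐ x ∂μ, 0 < wordDist μ m (wordAt x m 0) := by
  have hnull : ∀ w, wordDist μ m w = 0 → ∀ᵐ x ∂μ, wordAt x m 0 ≠ w := fun w hw =>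
    measure_eq_zero_iff_ae_notMem.1 ((measureReal_eq_zero_iff (measure_ne_top _ _)).1 hw)
  filter_upwards [ae_all_iff.2 fun w => ae_all_iff.2 (hnull w)] with x hx
  exact (wordDist_nonneg m _).lt_of_ne' fun h0 => hx _ h0 rfl

lemma ae_forall_wordDist_wordAt_pos [IsFiniteMeasure μ]
    [VAddInvariantMeasure (Site d) (Config A d) μ] (m : ℕ) :
    ∀ᵐ x ∂μ, ∀ c : Site d, 0 < wordDist μ m (wordAt x m c) := by
  refine ae_all_iff.2 fun c => ?_
  have hc := (measurePreserving_vadd c μ).quasiMeasurePreserving.ae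
    (ae_wordDist_wordAt_zero_pos (μ := μ) m)
  simpa only [wordAt_vadd, zero_add] using hc

lemma entH_nonneg (hA : 1 < A) {W : Type*} [Fintype W] {p : W → ℝ} (h0 : ∀ w, 0 ≤ p w)
    (h1 : ∀ w, p w ≤ 1) : 0 ≤ entH A p :=
  neg_nonneg.2 <| Finset.sum_nonpos fun w _ => mul_nonpos_of_nonneg_of_nonpos (h0 w) <|
    Real.logb_nonpos (Nat.one_lt_cast.2 hA) (h0 w) (h1 w)

/-- The base-`A` information content, under the weights `p`, of the `m`-word of `x` at the
origin. -/
noncomputable def wordInfo {m : ℕ} (p : Word A d m → ℝ) (x : Config A d) : ℝ :=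
  -Real.logb A (p (wordAt x m 0))

variable {m : ℕ}

lemma wordInfo_vadd (p : Word A d m → ℝ) (c : Site d) (x : Config A d) :
    wordInfo p (c +ᵥ x) = -Real.logb A (p (wordAt x m c)) := by
  rw [wordInfo, wordAt_vadd, zero_add]

lemma measurable_wordInfo (p : Word A d m → ℝ) : Measurable (wordInfo p) :=
  (measurable_of_finite fun w => -Real.logb A (p w)).comp (measurable_wordAt m 0)

lemma exists_abs_wordInfo_le (p : Word A d m → ℝ) : ∃ C, ∀ x, |wordInfo p x| ≤ C := by
  obtain ⟨C, hC⟩ := (Set.finite_range fun w => |-Real.logb A (p w)|).bddAbove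
  exact ⟨C, fun x => hC ⟨_, rfl⟩⟩

lemma integral_wordInfo_wordDist [IsFiniteMeasure μ] (m : ℕ) :
    ∫ x, wordInfo (wordDist μ m) x ∂μ = entH A (wordDist μ m) := by
  unfold wordInfo entH
  rw [integral_comp_wordAt m fun w => -Real.logb A (wordDist μ m w), ← Finset.sum_neg_distrib]
  simp only [mul_neg]

end Words

section TypicalWords

lemma ncard_setOf_le_prod_le {W ι : Type*} [Fintype W] [Fintype ι] {p : W → ℝ}
    (h0 : ∀ w, 0 ≤ p w) (h1 : ∑ w, p w = 1) {θ : ℝ} (hθ : 0 < θ) :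
    ({t : ι → W | θ ≤ ∏ r, p (t r)}.ncard : ℝ) ≤ θ⁻¹ := by
  classical
  rw [Set.ncard_eq_toFinset_card', inv_eq_one_div, le_div_iff₀ hθ, ← nsmul_eq_mul]
  calc _ ≤ ∑ t ∈ Set.toFinset {t : ι → W | θ ≤ ∏ r, p (t r)}, ∏ r, p (t r) :=
        Finset.card_nsmul_le_sum _ _ _ fun t ht => by simpa using ht
    _ ≤ ∑ t : ι → W, ∏ r, p (t r) :=
        Finset.sum_le_sum_of_subset_of_nonneg (Finset.subset_univ _) fun t _ _ =>
          Finset.prod_nonneg fun r _ => h0 _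
    _ = ∏ _r : ι, ∑ w, p w := (Fintype.prod_sum fun (_ : ι) w => p w).symm
    _ = 1 := by simp [h1]

lemma exists_mem_box_sum_add_smul_le {ψ : Site d → ℝ} (hψ : ∀ c, 0 ≤ ψ c) {k m q : ℕ} (hm : 0 < m)
    (hkq : m * q ≤ k) {N : ℝ} (hN : ∑ c ∈ box d k, ψ c ≤ (m : ℝ) ^ d * N) :
    ∃ s ∈ box d m, ∑ r ∈ box d q, ψ (s + m • r) ≤ N := by
  refine Finset.exists_le_of_sum_le ⟨0, mem_box.2 fun _ => hm⟩ ?_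
  rw [Finset.sum_comm, sum_box_mul hm, Finset.sum_const, card_box, nsmul_eq_mul, Nat.cast_pow]
  exact (Finset.sum_le_sum_of_subset_of_nonneg (box_mono hkq) fun c _ _ => hψ c).trans hN

lemma eq_of_forall_wordAt_add_smul_eq {x y : Config A d} {m q : ℕ} (hm : 0 < m) {s : Site d}
    (h : ∀ r ∈ box d q, wordAt x m (s + m • r) = wordAt y m (s + m • r)) {c : Site d}
    (hc : c ∈ cube s (m * q)) : x c = y c := by
  have hsc : ∀ j, s j ≤ c j ∧ c j - s j < m * q := fun j => by
    have := mem_cube.1 hc j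
    omega
  refine wordAt_eq_wordAt_iff.1 (h (fun j => (c j - s j) / m) ?_) c ?_
  · exact mem_box.2 fun j => Nat.div_lt_of_lt_mul (hsc j).2
  · refine mem_cube.2 fun j => ?_
    have := Nat.div_add_mod (c j - s j) m
    have := Nat.mod_lt (c j - s j) hm
    have := hsc j
    simp only [Pi.add_apply, Pi.smul_apply, smul_eq_mul]
    omega

variable {m : ℕ} {p : Word A d m → ℝ}

/-- The `k`-words of configurations whose `m`-words at the `q ^ d` sites `s + m • r`, `r ∈ Λ_q`,
have weights with product at least `θ`. -/
def heavyWords (p : Word A d m → ℝ) (k q : ℕ) (s : Site d) (θ : ℝ) : Set (Word A d k) :=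
  (wordAt · k 0) '' {x | θ ≤ ∏ r : box d q, p (wordAt x m (s + m • r.1))}

/-- The `k`-words of configurations over which the average information content of an `m`-word in
`Λ_k` is at most `t`. The weights are required to be positive because `Real.logb A 0 = 0`. -/
def typicalWords (p : Word A d m → ℝ) (k : ℕ) (t : ℝ) : Set (Word A d k) :=
  (wordAt · k 0) '' {x | (∀ c, 0 < p (wordAt x m c)) ∧ orbitAvg d k (wordInfo p) x ≤ t}

lemma ncard_heavyWords_le (hA : 0 < A) (hm : 0 < m) (h0 : ∀ w, 0 ≤ p w)
    (h1 : ∑ w, p w = 1) (k q : ℕ) (s : Site d) {θ : ℝ} (hθ : 0 < θ) :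
    (Set.ncard (heavyWords p k q s θ) : ℝ) ≤ θ⁻¹ * (A : ℝ) ^ #(cube 0 k \ cube s (m * q)) := by
  classical
  -- A `k`-word is determined by its `m`-words at the sites `s + m • r` and by the letters outside
  -- them.
  let code (x : Config A d) :
      (box d q → Word A d m) × ((cube 0 k \ cube s (m * q) : Finset (Site d)) → Fin A) :=
    (fun r => wordAt x m (s + m • r.1), fun c => x c)
  have hcode : Function.FactorsThrough (wordAt · k 0) code := fun x y hxy => by
    obtain ⟨htiles, hrest⟩ := Prod.mk.inj hxy
    refine wordAt_eq_wordAt_iff.2 fun c hc => ?_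
    by_cases hcs : c ∈ cube s (m * q)
    · exact eq_of_forall_wordAt_add_smul_eq hm (fun r hr => congrFun htiles ⟨r, hr⟩) hcs
    · exact congrFun hrest ⟨c, Finset.mem_sdiff.2 ⟨hc, hcs⟩⟩
  have : NeZero A := ⟨hA.ne'⟩
  obtain ⟨decode, hdecode⟩ := (Function.factorsThrough_iff _).1 hcode
  set tiles := {t : box d q → Word A d m | θ ≤ ∏ r, p (t r)}
  calc (Set.ncard (heavyWords p k q s θ) : ℝ) ≤ Set.ncard (tiles ×ˢ Set.univ) := by
        rw [heavyWords, hdecode, Set.image_comp]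
        exact Nat.cast_le.2 <| (Set.ncard_image_le (Set.toFinite _)).trans <|
          Set.ncard_le_ncard (Set.image_subset_iff.2 fun x hx => ⟨hx, Set.mem_univ _⟩)
    _ = Set.ncard tiles * (A : ℝ) ^ #(cube 0 k \ cube s (m * q)) := by
        rw [Set.ncard_prod, Set.ncard_univ, Nat.card_eq_fintype_card, Fintype.card_fun,
          Fintype.card_coe, Fintype.card_fin, Nat.cast_mul, Nat.cast_pow]
    _ ≤ _ := by
        gcongr
        exact ncard_setOf_le_prod_le h0 h1 hθ

lemma typicalWords_subset (hA : 1 < A) (hm : 0 < m) (h1 : ∀ w, p w ≤ 1) {k q : ℕ} (hk : 0 < k)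
    (hkq : m * q ≤ k) (t : ℝ) :
    typicalWords p k t ⊆
      ⋃ s ∈ box d m, heavyWords p k q s ((A : ℝ) ^ (-(t / (m : ℝ) ^ d * (k : ℝ) ^ d))) := by
  rintro _ ⟨x, ⟨hpos, havg⟩, rfl⟩
  have hA1 : (1 : ℝ) < A := Nat.one_lt_cast.2 hA
  have hA0 : (0 : ℝ) < A := zero_lt_one.trans hA1
  have hinfo0 (c : Site d) : 0 ≤ wordInfo p (c +ᵥ x) := by
    rw [wordInfo_vadd]
    exact neg_nonneg.2 (Real.logb_nonpos hA1 (hpos c).le (h1 _))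
  have hsum : ∑ c ∈ box d k, wordInfo p (c +ᵥ x) ≤
      (m : ℝ) ^ d * (t / (m : ℝ) ^ d * (k : ℝ) ^ d) := by
    rw [← pow_smul_boxAvg hk, smul_eq_mul, ← mul_assoc, mul_div_cancel₀ _ (by positivity), mul_comm]
    gcongr
    exact havg
  obtain ⟨s, hs, hle⟩ := exists_mem_box_sum_add_smul_le hinfo0 hm hkq hsum
  refine Set.mem_biUnion (Finset.mem_coe.2 hs) ⟨x, ?_, rfl⟩
  have hprod : ∏ r ∈ box d q, p (wordAt x m (s + m • r)) =
      (A : ℝ) ^ (-∑ r ∈ box d q, wordInfo p ((s + m • r) +ᵥ x)) := by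
    rw [← Finset.sum_neg_distrib, Real.rpow_sum_of_pos hA0]
    refine Finset.prod_congr rfl fun r _ => ?_
    rw [wordInfo_vadd, neg_neg, Real.rpow_logb hA0 hA1.ne' (hpos _)]
  rw [Set.mem_ofPred_eq, Finset.prod_coe_sort _ fun r => p (wordAt x m (s + m • r)), hprod]
  exact Real.rpow_le_rpow_of_exponent_le hA1.le (neg_le_neg hle)

lemma card_cube_sdiff_cube_le {k q : ℕ} {s : Site d} (hs : s ∈ box d m) (hle : m * q + m ≤ k)
    (hge : k ≤ m * q + 2 * m) : #(cube 0 k \ cube s (m * q)) ≤ #(shell d (2 * m) k) := by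
  have hsub : cube s (m * q) ⊆ cube 0 k := fun c hc => mem_cube.2 fun j => by
    have := mem_cube.1 hc j
    have := mem_box.1 hs j
    simp only [Pi.zero_apply]
    omega
  rw [Finset.card_sdiff_of_subset hsub, card_cube, card_cube, card_shell]
  exact Nat.sub_le_sub_left (Nat.pow_le_pow_left (by omega) d) _

lemma ncard_typicalWords_le (hA : 1 < A) (hm : 0 < m) (h0 : ∀ w, 0 ≤ p w) (h1 : ∑ w, p w = 1)
    {k : ℕ} (hk : 2 * m ≤ k) (t : ℝ) :
    (Set.ncard (typicalWords p k t) : ℝ) ≤ (m : ℝ) ^ d *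
      ((A : ℝ) ^ (t / (m : ℝ) ^ d * (k : ℝ) ^ d) * (A : ℝ) ^ #(shell d (2 * m) k)) := by
  have hA0 : (0 : ℝ) < A := by positivity
  have hp1 (w : Word A d m) : p w ≤ 1 :=
    (Finset.single_le_sum (fun w _ => h0 w) (Finset.mem_univ w)).trans_eq h1
  obtain ⟨q, hle, hge⟩ : ∃ q, m * q + m ≤ k ∧ k ≤ m * q + 2 * m := by
    have hdiv := Nat.div_add_mod (k - m) m
    have hmod := Nat.mod_lt (k - m) hm
    exact ⟨(k - m) / m, by omega, by omega⟩
  set θ := (A : ℝ) ^ (-(t / (m : ℝ) ^ d * (k : ℝ) ^ d)) with hθ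
  calc (Set.ncard (typicalWords p k t) : ℝ)
      ≤ Set.ncard (⋃ s ∈ box d m, heavyWords p k q s θ) := Nat.cast_le.2 <|
        Set.ncard_le_ncard (typicalWords_subset hA hm hp1 (by omega) (by omega) t)
    _ ≤ ∑ s ∈ box d m, (Set.ncard (heavyWords p k q s θ) : ℝ) := by
        exact_mod_cast Finset.set_ncard_biUnion_le _ _
    _ ≤ ∑ _s ∈ box d m, θ⁻¹ * (A : ℝ) ^ #(shell d (2 * m) k) := by
        refine Finset.sum_le_sum fun _ hs => (ncard_heavyWords_le (by omega) hm h0 h1 k q _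
          (Real.rpow_pos_of_pos hA0 _)).trans ?_
        have hcard := card_cube_sdiff_cube_le hs hle hge
        gcongr
        exact_mod_cast hA.le
    _ = _ := by
        rw [Finset.sum_const, card_box, nsmul_eq_mul, Nat.cast_pow, hθ, Real.rpow_neg hA0.le,
          inv_inv]

lemma logb_ncard_typicalWords_le (hA : 1 < A) (hm : 0 < m) (h0 : ∀ w, 0 ≤ p w)
    (h1 : ∑ w, p w = 1) {k : ℕ} (hk : 2 * m ≤ k) {t : ℝ} (ht : 0 ≤ t) :
    Real.logb A (Set.ncard (typicalWords p k t)) ≤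
      t / (m : ℝ) ^ d * (k : ℝ) ^ d + (Real.logb A ((m : ℝ) ^ d) + #(shell d (2 * m) k)) := by
  have hA1 : (1 : ℝ) < A := Nat.one_lt_cast.2 hA
  have hA0 : (0 : ℝ) < A := zero_lt_one.trans hA1
  rcases Nat.eq_zero_or_pos (Set.ncard (typicalWords p k t)) with hzero | hpos
  · have hm1 : (1 : ℝ) ≤ (m : ℝ) ^ d := one_le_pow₀ (by exact_mod_cast hm)
    have := Real.logb_nonneg hA1 hm1
    rw [hzero, Nat.cast_zero, Real.logb_zero]
    positivity
  · refine (Real.logb_le_logb_of_le hA1 (by exact_mod_cast hpos)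
      (ncard_typicalWords_le hA hm h0 h1 hk t)).trans_eq ?_
    rw [← Real.rpow_natCast (A : ℝ) #_, ← Real.rpow_add hA0, Real.logb_mul (by positivity)
      (by positivity), Real.logb_rpow hA0 hA1.ne']
    ring

end TypicalWords

section Sampling

lemma empProb_eq (x : Config A d) (k n : ℕ) (T : Set (Word A d k))
    [DecidablePred fun r : Site d => wordAt x k (k • r) ∈ T] :
    empProb x k n T =
      #{r ∈ box d (n / k) | wordAt x k (k • r) ∈ T} / ((n / k : ℕ) : ℝ) ^ d := by
  classical
  rw [empProb, Set.ncard_eq_toFinset_card', Set.toFinset_ofPred, Finset.card_filter,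
    Finset.card_filter,
    ← sum_fin_eq_sum_box (n / k) fun r => if wordAt x k (k • r) ∈ T then 1 else 0]
  rfl

variable {m : ℕ} {μ : Measure (Config A d)} [IsProbabilityMeasure μ]

lemma eventually_logb_ncard_typicalWords_div_le (hA : 1 < A) (hd : 1 ≤ d) (hm : 0 < m)
    {p : Word A d m → ℝ} (h0 : ∀ w, 0 ≤ p w) (h1 : ∑ w, p w = 1) {t ε : ℝ} (ht : 0 ≤ t)
    (hε : 0 < ε) :
    ∀ᶠ k : ℕ in atTop, Real.logb A (Set.ncard (typicalWords p k t)) / (k : ℝ) ^ d ≤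
      t / (m : ℝ) ^ d + ε := by
  filter_upwards [eventually_const_add_card_shell_le hd (Real.logb A ((m : ℝ) ^ d)) (2 * m) hε,
    eventually_ge_atTop (2 * m)] with k hshell hk
  have hk0 : 0 < k := by omega
  rw [div_le_iff₀ (by positivity), add_mul]
  exact (logb_ncard_typicalWords_le hA hm h0 h1 hk ht).trans (by gcongr)

lemma eventually_ae_eventually_lt_empProb_typicalWords [ErgodicVAdd (Site d) (Config A d) μ]
    (m : ℕ) {ε δ : ℝ} (hε : 0 < ε) (hδ : 0 < δ) :
    ∀ᶠ k : ℕ in atTop, ∀ᵐ x ∂μ, ∀ᶠ n : ℕ in atTop,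
      1 - δ < empProb x k n (typicalWords (wordDist μ m) k (entH A (wordDist μ m) + ε)) := by
  classical
  obtain ⟨C, hC⟩ := exists_abs_wordInfo_le (wordDist μ m)
  have hblocks := eventually_ae_eventually_lt_card_filter_abs_orbitAvg_sub_lt (d := d) (μ := μ)
    (measurable_wordInfo (wordDist μ m)) hC hε hδ
  rw [integral_wordInfo_wordDist] at hblocks
  filter_upwards [hblocks, eventually_gt_atTop 0] with k hk hk0
  filter_upwards [hk, ae_forall_wordDist_wordAt_pos (μ := μ) m] with x hx hpos
  have hdiv := Nat.tendsto_div_const_atTop hk0.ne'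
  filter_upwards [hdiv.eventually hx, hdiv.eventually_gt_atTop 0] with n hn hn0
  rw [empProb_eq, lt_div_iff₀ (by positivity)]
  refine hn.trans_le <| Nat.cast_le.2 <| Finset.card_le_card <|
    Finset.monotone_filter_right _ fun r _ hr => ⟨k • r +ᵥ x, ⟨fun c => ?_, ?_⟩, ?_⟩
  · rw [wordAt_vadd]
    exact hpos _
  · linarith [(abs_lt.1 hr).2]
  · simp only [wordAt_vadd, zero_add]

end Sampling

/-- For every ergodic `μ` with entropy rate `h` and `δ ∈ (0,1/2)`, for all
large enough `k` there is a set `𝒯_k` of `k`-words of log-cardinality at most `(h+δ)k^d`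
which eventually carries empirical mass more than `1-δ`, almost surely. -/
theorem typical_sampling_sets_exist
    (A d : ℕ) (hA : 2 ≤ A) (hd : 1 ≤ d)
    (μ : Measure (Config A d)) [IsProbabilityMeasure μ] (hμ : ErgodicShift μ)
    (h : ℝ) (hrate : HasEntropyRate μ h)
    (δ : ℝ) (hδ0 : 0 < δ) (hδ1 : δ < 1 / 2) :
    ∃ k0 : ℕ, ∀ k ≥ k0, ∃ T : Set (Word A d k),
      Real.logb A (Set.ncard T) / (k : ℝ) ^ d ≤ h + δ ∧
      ∀ᵐ x ∂μ, ∃ n0 : ℕ, ∀ n ≥ n0, 1 - δ < empProb x k n T := by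
  have := hμ.ergodicVAdd
  have hε : 0 < δ / 3 := by positivity
  obtain ⟨m, hmrate, hm⟩ :=
    ((hrate.eventually_lt_const (lt_add_of_pos_right h hε)).and (eventually_gt_atTop 0)).exists
  set t := entH A (wordDist μ m) + δ / 3
  have ht : 0 ≤ t := add_nonneg (entH_nonneg hA (wordDist_nonneg m) (wordDist_le_one m)) hε.le
  have htm : t / (m : ℝ) ^ d ≤ h + 2 * (δ / 3) := by
    have := div_le_self hε.le (one_le_pow₀ (n := d) (Nat.one_le_cast.2 hm : (1 : ℝ) ≤ m))
    rw [add_div]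
    linarith
  refine eventually_atTop.1 ?_
  filter_upwards [eventually_logb_ncard_typicalWords_div_le hA hd hm
    (wordDist_nonneg (μ := μ) m) (sum_wordDist m) ht hε,
    eventually_ae_eventually_lt_empProb_typicalWords (μ := μ) m hε hδ0] with k hcard hsample
  refine ⟨typicalWords (wordDist μ m) k t, by linarith, ?_⟩
  simpa only [eventually_atTop] using hsample

end SRU1408
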